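/- Let a, b > 0 and let X, W be independent random variables with W ~ β²_{b,a} and X valued in (0,∞). Then X has the same distribution as 1/(1 + X·W) if and only if X ~ μ_{a,a,b}. -/

import Mathlib

open MeasureTheory ProbabilityTheory Real Set Filter Topology

noncomputable def gammaDens (p σ y : ℝ) : ℝ :=
  if 0 < y then σ ^ p / Real.Gamma p * Real.exp (-(σ * y)) * y ^ (p - 1) else 0

noncomputable def gammaM (p σ : ℝ) : Measure ℝ :=
  MeasureTheory.volume.withDensity fun y => ENNReal.ofReal (gammaDens p σ y)

noncomputable def beta1Dens (p q x : ℝ) : ℝ :=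
  if 0 < x ∧ x < 1 then
    Real.Gamma (p + q) / (Real.Gamma p * Real.Gamma q) * x ^ (p - 1) * (1 - x) ^ (q - 1)
  else 0

noncomputable def beta1 (p q : ℝ) : Measure ℝ :=
  MeasureTheory.volume.withDensity fun x => ENNReal.ofReal (beta1Dens p q x)

noncomputable def beta2Dens (p q y : ℝ) : ℝ :=
  if 0 < y then
    Real.Gamma (p + q) / (Real.Gamma p * Real.Gamma q) * y ^ (p - 1) * (1 + y) ^ (-(p + q))
  else 0

noncomputable def beta2 (p q : ℝ) : Measure ℝ :=
  MeasureTheory.volume.withDensity fun y => ENNReal.ofReal (beta2Dens p q y)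

/-- Pochhammer (rising factorial) symbol `(a)_n`. -/
noncomputable def poch (a : ℝ) (n : ℕ) : ℝ := ∏ i ∈ Finset.range n, (a + (i : ℝ))

/-- Gauss hypergeometric function `₂F₁(a,b;c;x)`. -/
noncomputable def F21 (a b c x : ℝ) : ℝ :=
  ∑' n : ℕ, poch a n * poch b n / ((n.factorial : ℝ) * poch c n) * x ^ n

/-- Generalized hypergeometric `₃F₂(a₁,a₂,a₃;b₁,b₂;1)` at unit argument. -/
noncomputable def F32one (a1 a2 a3 b1 b2 : ℝ) : ℝ :=
  ∑' n : ℕ, poch a1 n * poch a2 n * poch a3 n /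
    ((n.factorial : ℝ) * poch b1 n * poch b2 n)

/-- Normalizing constant of the real beta-hypergeometric distribution. -/
noncomputable def Cbh (a a' b : ℝ) : ℝ :=
  Real.Gamma (a + b) / (Real.Gamma a * Real.Gamma b * F32one a a b (a + b) (a + a'))

noncomputable def bhDens (a a' b x : ℝ) : ℝ :=
  if 0 < x ∧ x < 1 then
    Cbh a a' b * x ^ (a - 1) * (1 - x) ^ (b - 1) * F21 a b (a + a') x
  else 0

/-- The real beta-hypergeometric distribution `μ_{a,a',b}`. -/
noncomputable def bhMeasure (a a' b : ℝ) : Measure ℝ :=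
  MeasureTheory.volume.withDensity fun x => ENNReal.ofReal (bhDens a a' b x)

/-!
The map `x ↦ law of 1 / (1 + x W)` is a Markov kernel on the line, and `X` is distributed as
`1 / (1 + X W)` exactly when the law of `X` is invariant under it.

*Uniqueness.* Started from `x ≤ 0`, the chain enters `(0, ∞)` with positive probability, and it
never returns, so invariant laws are carried by `(0, ∞)`. From any `x > 0` the transition law has
a density that is positive on all of `(0, 1)`. If two distinct laws were invariant, so would be the
positive and negative parts of their difference; these are mutually singular, whereas the transition
laws overlap.

*Invariance.* Expanding the transition density in a binomial series and summing with Gauss's theorem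
shows that the kernel driven by `β²_{b,a'}` carries `μ_{a,a',b}` to `μ_{a',a,b}`; take `a' = a`.
-/

open scoped ENNReal

section Pochhammer

lemma poch_succ (s : ℝ) (n : ℕ) : poch s (n + 1) = poch s n * (s + n) :=
  Finset.prod_range_succ ..

lemma poch_eq_ascPochhammer_eval (s : ℝ) (n : ℕ) : poch s n = (ascPochhammer ℝ n).eval s := by
  induction n with
  | zero => simp [poch]
  | succ n ih => rw [ascPochhammer_succ_eval, ← ih, poch_succ]

lemma poch_pos {s : ℝ} (hs : 0 < s) (n : ℕ) : 0 < poch s n :=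
  Finset.prod_pos fun _ _ => by positivity

lemma Gamma_add_natCast {s : ℝ} (hs : 0 < s) (n : ℕ) :
    Gamma (s + n) = poch s n * Gamma s := by
  induction n with
  | zero => simp [poch]
  | succ n ih =>
    rw [Nat.cast_succ, ← add_assoc, Gamma_add_one (by positivity), ih, poch_succ]
    ring

lemma beta_add_natCast_left {p q : ℝ} (hp : 0 < p) (hq : 0 < q) (n : ℕ) :
    beta (p + n) q = beta p q * (poch p n / poch (p + q) n) := by
  have := (Gamma_pos_of_pos (add_pos hp hq)).ne'
  have := (poch_pos (add_pos hp hq) n).ne'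
  rw [beta, beta, add_right_comm, Gamma_add_natCast hp, Gamma_add_natCast (add_pos hp hq)]
  field_simp

lemma ringChoose_eq_poch_div_factorial (s : ℝ) (n : ℕ) :
    Ring.choose (s + n - 1) n = poch s n / n.factorial := by
  have h := Ring.factorial_nsmul_multichoose_eq_ascPochhammer s n
  rw [Polynomial.ascPochhammer_smeval_eq_eval, ← poch_eq_ascPochhammer_eval, nsmul_eq_mul] at h
  rw [eq_div_iff (by positivity), ← h, Ring.choose, mul_comm]
  ring_nf

lemma hasSum_poch_div_factorial_mul_pow (s : ℝ) {x : ℝ} (hx : |x| < 1) :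
    HasSum (fun n : ℕ => poch s n / n.factorial * x ^ n) ((1 - x) ^ (-s)) := by
  have h := (one_div_one_sub_rpow_hasFPowerSeriesOnBall_zero s).hasSum (y := x)
    (by simpa [enorm_eq_nnnorm, ← NNReal.coe_lt_coe] using hx)
  simp only [FormalMultilinearSeries.ofScalars_apply_eq, ringChoose_eq_poch_div_factorial] at h
  rw [rpow_neg (by linarith [abs_lt.1 hx])]
  simpa using h

lemma tsum_ofReal_poch_div_factorial_mul_pow {s x : ℝ} (hs : 0 < s) (hx₀ : 0 ≤ x) (hx₁ : x < 1) :
    ∑' n : ℕ, ENNReal.ofReal (poch s n / n.factorial * x ^ n)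
      = ENNReal.ofReal ((1 - x) ^ (-s)) := by
  have h := hasSum_poch_div_factorial_mul_pow s (x := x) (by rwa [abs_of_nonneg hx₀])
  rw [← h.tsum_eq, ENNReal.ofReal_tsum_of_nonneg (fun n => ?_) h.summable]
  have := poch_pos hs n
  positivity

end Pochhammer

section BetaIntegral

lemma lintegral_rpow_mul_one_sub_rpow {p q : ℝ} (hp : 0 < p) (hq : 0 < q) :
    ∫⁻ x in Ioo 0 1, ENNReal.ofReal (x ^ (p - 1) * (1 - x) ^ (q - 1))
      = ENNReal.ofReal (beta p q) := by
  have hβ := beta_pos hp hq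
  have h := lintegral_betaPDF_eq_one hp hq
  simp_rw [lintegral_betaPDF, mul_assoc, ENNReal.ofReal_mul (one_div_pos.2 hβ).le] at h
  rw [lintegral_const_mul _ (by fun_prop)] at h
  rw [← mul_one (ENNReal.ofReal (beta p q)), ← h, ← mul_assoc, ← ENNReal.ofReal_mul hβ.le,
    mul_one_div_cancel hβ.ne', ENNReal.ofReal_one, one_mul]

lemma lintegral_rpow_mul_one_sub_rpow_mul_tsum {p q : ℝ} (hp : 0 < p) (hq : 0 < q)
    {c : ℕ → ℝ} (hc : ∀ n, 0 ≤ c n) :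
    ∫⁻ x in Ioo 0 1, ENNReal.ofReal (x ^ (p - 1) * (1 - x) ^ (q - 1)) *
        ∑' n, ENNReal.ofReal (c n * x ^ n)
      = ENNReal.ofReal (beta p q) *
        ∑' n, ENNReal.ofReal (c n * (poch p n / poch (p + q) n)) := by
  have expand : ∀ x ∈ Ioo (0 : ℝ) 1, ENNReal.ofReal (x ^ (p - 1) * (1 - x) ^ (q - 1)) *
        ∑' n, ENNReal.ofReal (c n * x ^ n)
      = ∑' n : ℕ, ENNReal.ofReal (c n) *
        ENNReal.ofReal (x ^ (p + n - 1) * (1 - x) ^ (q - 1)) := by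
    rintro x ⟨hx₀, hx₁⟩
    have := sub_pos.2 hx₁
    rw [← ENNReal.tsum_mul_left]
    refine tsum_congr fun n => ?_
    rw [← ENNReal.ofReal_mul (by positivity), ← ENNReal.ofReal_mul (hc n),
      add_sub_right_comm, rpow_add_natCast hx₀.ne']
    ring_nf
  rw [setLIntegral_congr_fun measurableSet_Ioo expand, lintegral_tsum fun n => by fun_prop,
    ← ENNReal.tsum_mul_left]
  refine tsum_congr fun n => ?_
  rw [lintegral_const_mul _ (by fun_prop), lintegral_rpow_mul_one_sub_rpow (by positivity) hq,
    beta_add_natCast_left hp hq, ← ENNReal.ofReal_mul (hc n),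
    ← ENNReal.ofReal_mul (beta_pos hp hq).le]
  ring_nf

end BetaIntegral

section Hypergeometric

/-- The coefficient of `x ^ n` in the Gauss series `F21 a b c x`. -/
noncomputable def F21Coeff (a b c : ℝ) (n : ℕ) : ℝ :=
  poch a n * poch b n / (n.factorial * poch c n)

/-- The Gauss series as an `ℝ≥0∞`-valued sum. For positive parameters and `0 ≤ x < 1` this is
`F21 a b c x`; the extended values let series and integrals be exchanged freely. -/
noncomputable def eF21 (a b c x : ℝ) : ℝ≥0∞ := ∑' n, ENNReal.ofReal (F21Coeff a b c n * x ^ n)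

variable {a b c : ℝ}

lemma F21Coeff_pos (ha : 0 < a) (hb : 0 < b) (hc : 0 < c) (n : ℕ) : 0 < F21Coeff a b c n := by
  have := poch_pos ha n
  have := poch_pos hb n
  have := poch_pos hc n
  unfold F21Coeff
  positivity

lemma F21Coeff_eq_ordinaryHypergeometricCoefficient (a b c : ℝ) (n : ℕ) :
    F21Coeff a b c n = ordinaryHypergeometricCoefficient a b c n := by
  simp only [F21Coeff, ordinaryHypergeometricCoefficient, poch_eq_ascPochhammer_eval]
  ring

lemma summable_F21Coeff_mul_pow (ha : 0 < a) (hb : 0 < b) (hc : 0 < c) {x : ℝ} (hx : |x| < 1) :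
    Summable fun n => F21Coeff a b c n * x ^ n := by
  have hrad : (ordinaryHypergeometricSeries ℝ a b c).radius = 1 :=
    ordinaryHypergeometricSeries_radius_eq_one ℝ a b c fun k => by
      have : (0 : ℝ) ≤ k := k.cast_nonneg
      refine ⟨?_, ?_, ?_⟩ <;> linarith
  have h := (ordinaryHypergeometricSeries ℝ a b c).summable (x := x)
    (by simpa [hrad, enorm_eq_nnnorm, ← NNReal.coe_lt_coe] using hx)
  simpa [ordinaryHypergeometricSeries, FormalMultilinearSeries.ofScalars_apply_eq,
    F21Coeff_eq_ordinaryHypergeometricCoefficient, mul_comm] using h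

lemma ofReal_F21 (ha : 0 < a) (hb : 0 < b) (hc : 0 < c) {x : ℝ} (hx₀ : 0 ≤ x) (hx₁ : x < 1) :
    ENNReal.ofReal (F21 a b c x) = eF21 a b c x :=
  ENNReal.ofReal_tsum_of_nonneg (fun n => mul_nonneg (F21Coeff_pos ha hb hc n).le (by positivity))
    (summable_F21Coeff_mul_pow ha hb hc (by rwa [abs_of_nonneg hx₀]))

@[fun_prop]
lemma measurable_eF21 (a b c : ℝ) : Measurable (eF21 a b c) := by
  unfold eF21
  fun_prop

/-- Gauss's summation theorem, by integrating the binomial series of `(1 - x) ^ (-a)` against a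
beta weight in two ways. -/
lemma tsum_ofReal_F21Coeff (ha : 0 < a) (hb : 0 < b) (habc : a + b < c) :
    ∑' n, ENNReal.ofReal (F21Coeff a b c n)
      = ENNReal.ofReal (beta b (c - a - b) / beta b (c - b)) := by
  have hβ := beta_pos hb (show 0 < c - b by linarith)
  have hcoeff (n : ℕ) : 0 ≤ poch a n / n.factorial :=
    div_nonneg (poch_pos ha n).le (Nat.cast_nonneg _)
  have key : ENNReal.ofReal (beta b (c - a - b))
      = ENNReal.ofReal (beta b (c - b)) * ∑' n, ENNReal.ofReal (F21Coeff a b c n) := by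
    calc ENNReal.ofReal (beta b (c - a - b))
        = ∫⁻ x in Ioo 0 1, ENNReal.ofReal (x ^ (b - 1) * (1 - x) ^ (c - a - b - 1)) :=
          (lintegral_rpow_mul_one_sub_rpow hb (by linarith)).symm
      _ = ∫⁻ x in Ioo 0 1, ENNReal.ofReal (x ^ (b - 1) * (1 - x) ^ (c - b - 1)) *
            ∑' n, ENNReal.ofReal (poch a n / n.factorial * x ^ n) := by
          refine setLIntegral_congr_fun measurableSet_Ioo fun x hx => ?_
          obtain ⟨hx₀, hx₁⟩ := hx
          have hx' := sub_pos.2 hx₁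
          rw [tsum_ofReal_poch_div_factorial_mul_pow ha hx₀.le hx₁,
            ← ENNReal.ofReal_mul (by positivity), mul_assoc, ← rpow_add hx']
          ring_nf
      _ = _ := by
          rw [lintegral_rpow_mul_one_sub_rpow_mul_tsum hb (by linarith) hcoeff, add_sub_cancel]
          simp only [F21Coeff, div_mul_div_comm]
  rw [ENNReal.ofReal_div_of_pos hβ, key, mul_comm,
    ENNReal.mul_div_cancel_right (by simpa using hβ) ENNReal.ofReal_ne_top]

lemma lintegral_rpow_mul_one_sub_rpow_mul_eF21 (ha : 0 < a) (hb : 0 < b) (hc : 0 < c) {q : ℝ}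
    (hq : 0 < q) (habc : a + b < c + q) :
    ∫⁻ x in Ioo 0 1, ENNReal.ofReal (x ^ (c - 1) * (1 - x) ^ (q - 1)) * eF21 a b c x
      = ENNReal.ofReal (beta c q * (beta b (c + q - a - b) / beta b (c + q - b))) := by
  have hcoeff (n : ℕ) :
      F21Coeff a b c n * (poch c n / poch (c + q) n) = F21Coeff a b (c + q) n := by
    have := (poch_pos hc n).ne'
    have := (poch_pos (add_pos hc hq) n).ne'
    unfold F21Coeff
    field_simp
  unfold eF21
  rw [lintegral_rpow_mul_one_sub_rpow_mul_tsum hc hq fun n => (F21Coeff_pos ha hb hc n).le]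
  simp_rw [hcoeff]
  rw [tsum_ofReal_F21Coeff ha hb habc, ENNReal.ofReal_mul (beta_pos hc hq).le]

end Hypergeometric

section EulerIntegral

variable {a a' b : ℝ}

lemma beta_mul_beta_div_beta_add_natCast (ha : 0 < a) (ha' : 0 < a') (hb : 0 < b) (n : ℕ) :
    poch (b + a') n / n.factorial *
        (beta (a + a') (b + n) * (beta b (a' + n) / beta b (a + a' + n)))
      = beta b a' * F21Coeff a' b (a + a') n := by
  have haa' := add_pos ha ha'
  have := (Gamma_pos_of_pos hb).ne'
  have := (Gamma_pos_of_pos haa').ne'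
  have := (Gamma_pos_of_pos (add_pos hb ha')).ne'
  have := (Gamma_pos_of_pos (add_pos hb haa')).ne'
  have := (poch_pos haa' n).ne'
  have := (poch_pos (add_pos hb ha') n).ne'
  have := (poch_pos (add_pos hb haa') n).ne'
  rw [beta, beta, beta, beta, F21Coeff, ← add_assoc b, ← add_assoc b, ← add_assoc (a + a'),
    add_comm (a + a') b, Gamma_add_natCast hb, Gamma_add_natCast ha', Gamma_add_natCast haa',
    Gamma_add_natCast (add_pos hb ha'), Gamma_add_natCast (add_pos hb haa')]
  field_simp

/-- The identity behind the invariance: expanding the last factor of the weight in powers of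
`y * (1 - x)` reduces it, term by term, to Gauss summation. -/
lemma lintegral_rpow_mul_one_sub_rpow_mul_rpow_mul_eF21 (ha : 0 < a) (ha' : 0 < a') (hb : 0 < b)
    {y : ℝ} (hy₀ : 0 ≤ y) (hy₁ : y < 1) :
    ∫⁻ x in Ioo 0 1, ENNReal.ofReal (x ^ (a + a' - 1) * (1 - x) ^ (b - 1) *
        (1 - y * (1 - x)) ^ (-(b + a'))) * eF21 a b (a + a') x
      = ENNReal.ofReal (beta b a') * eF21 a' b (a + a') y := by
  have hc (n : ℕ) : 0 ≤ poch (b + a') n / n.factorial * y ^ n :=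
    mul_nonneg (div_nonneg (poch_pos (add_pos hb ha') n).le (Nat.cast_nonneg _)) (pow_nonneg hy₀ n)
  have expand : ∀ x ∈ Ioo (0 : ℝ) 1,
      ENNReal.ofReal (x ^ (a + a' - 1) * (1 - x) ^ (b - 1) *
        (1 - y * (1 - x)) ^ (-(b + a'))) * eF21 a b (a + a') x
      = ∑' n : ℕ, ENNReal.ofReal (poch (b + a') n / n.factorial * y ^ n) *
        (ENNReal.ofReal (x ^ (a + a' - 1) * (1 - x) ^ (b + n - 1)) * eF21 a b (a + a') x) := by
    rintro x ⟨hx₀, hx₁⟩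
    have hx' := sub_pos.2 hx₁
    rw [ENNReal.ofReal_mul (by positivity), ← tsum_ofReal_poch_div_factorial_mul_pow
      (add_pos hb ha') (by positivity) (by nlinarith), ← ENNReal.tsum_mul_left,
      ← ENNReal.tsum_mul_right]
    refine tsum_congr fun n => ?_
    rw [← mul_assoc, ← ENNReal.ofReal_mul (by positivity), ← ENNReal.ofReal_mul (hc n),
      add_sub_right_comm b, rpow_add_natCast hx'.ne', mul_pow]
    ring_nf
  rw [setLIntegral_congr_fun measurableSet_Ioo expand, lintegral_tsum fun n => by fun_prop,
    eF21, ← ENNReal.tsum_mul_left]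
  refine tsum_congr fun n => ?_
  have : (0 : ℝ) ≤ n := n.cast_nonneg
  rw [lintegral_const_mul _ (by fun_prop), lintegral_rpow_mul_one_sub_rpow_mul_eF21 ha hb
      (by positivity) (by positivity) (by linarith), ← ENNReal.ofReal_mul (hc n),
    ← ENNReal.ofReal_mul (beta_pos hb ha').le, ← mul_assoc (beta b a'),
    ← beta_mul_beta_div_beta_add_natCast ha ha' hb]
  ring_nf

end EulerIntegral

section ClausenSeries

lemma poch_mul_poch_le {x y u v : ℝ} (hx : 0 ≤ x) (hu : x ≤ u) (hv : x ≤ v) (h : x + y = u + v)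
    (n : ℕ) : poch x n * poch y n ≤ poch u n * poch v n := by
  unfold poch
  rw [← Finset.prod_mul_distrib, ← Finset.prod_mul_distrib]
  have hy : 0 ≤ y := by linarith
  refine Finset.prod_le_prod (fun i _ => by positivity) fun i _ => ?_
  have hprod := mul_nonneg (sub_nonneg.2 hu) (sub_nonneg.2 hv)
  obtain rfl : y = u + v - x := by linarith
  linarith

lemma summable_F21Coeff {a b c : ℝ} (ha : 0 < a) (hb : 0 < b) (habc : a + b < c) :
    Summable (F21Coeff a b c) := by
  have hsum : ∑' n, ENNReal.ofReal (F21Coeff a b c n) ≠ ∞ := by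
    rw [tsum_ofReal_F21Coeff ha hb habc]
    exact ENNReal.ofReal_ne_top
  exact (ENNReal.summable_toReal hsum).congr fun n =>
    ENNReal.toReal_ofReal (F21Coeff_pos ha hb (by linarith) n).le

variable {a₁ a₂ a₃ b₁ b₂ : ℝ}

lemma F32one_term_pos (ha₁ : 0 < a₁) (ha₂ : 0 < a₂) (ha₃ : 0 < a₃) (hb₁ : 0 < b₁) (hb₂ : 0 < b₂)
    (n : ℕ) : 0 < poch a₁ n * poch a₂ n * poch a₃ n / (n.factorial * poch b₁ n * poch b₂ n) := by
  have := poch_pos ha₁ n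
  have := poch_pos ha₂ n
  have := poch_pos ha₃ n
  have := poch_pos hb₁ n
  have := poch_pos hb₂ n
  positivity

/-- The series is dominated by the Gauss series `₂F₁(a₂, a₃; b₁ + b₂ - a₁; 1)`. -/
lemma summable_F32one (ha₁ : 0 < a₁) (ha₂ : 0 < a₂) (ha₃ : 0 < a₃) (hb₁ : a₁ ≤ b₁) (hb₂ : a₁ ≤ b₂)
    (h : a₁ + a₂ + a₃ < b₁ + b₂) :
    Summable fun n : ℕ =>
      poch a₁ n * poch a₂ n * poch a₃ n / (n.factorial * poch b₁ n * poch b₂ n) := by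
  have hb₁' := ha₁.trans_le hb₁
  have hb₂' := ha₁.trans_le hb₂
  have hc : 0 < b₁ + b₂ - a₁ := by linarith
  refine (summable_F21Coeff ha₂ ha₃ (c := b₁ + b₂ - a₁) (by linarith)).of_nonneg_of_le
    (fun n => (F32one_term_pos ha₁ ha₂ ha₃ hb₁' hb₂' n).le) fun n => ?_
  have := poch_pos ha₂ n
  have := poch_pos ha₃ n
  have := poch_pos hb₁' n
  have := poch_pos hb₂' n
  have := poch_pos hc n
  rw [F21Coeff, div_le_div_iff₀ (by positivity) (by positivity)]
  calc poch a₁ n * poch a₂ n * poch a₃ n * (n.factorial * poch (b₁ + b₂ - a₁) n)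
      = poch a₂ n * poch a₃ n * n.factorial * (poch a₁ n * poch (b₁ + b₂ - a₁) n) := by ring
    _ ≤ poch a₂ n * poch a₃ n * n.factorial * (poch b₁ n * poch b₂ n) := by
        exact mul_le_mul_of_nonneg_left (poch_mul_poch_le ha₁.le hb₁ hb₂ (by ring) n)
          (by positivity)
    _ = poch a₂ n * poch a₃ n * (n.factorial * poch b₁ n * poch b₂ n) := by ring

lemma F32one_pos (ha₁ : 0 < a₁) (ha₂ : 0 < a₂) (ha₃ : 0 < a₃) (hb₁ : a₁ ≤ b₁) (hb₂ : a₁ ≤ b₂)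
    (h : a₁ + a₂ + a₃ < b₁ + b₂) : 0 < F32one a₁ a₂ a₃ b₁ b₂ :=
  have hpos := F32one_term_pos ha₁ ha₂ ha₃ (ha₁.trans_le hb₁) (ha₁.trans_le hb₂)
  (summable_F32one ha₁ ha₂ ha₃ hb₁ hb₂ h).tsum_pos (fun n => (hpos n).le) 0 (hpos 0)

end ClausenSeries

section BetaHypergeometric

variable {a a' b : ℝ}

/-- The density of `μ_{a,a',b}` on `(0,1)` up to its normalizing constant, as an
`ℝ≥0∞`-valued function. -/
noncomputable def bhWeight (a a' b x : ℝ) : ℝ≥0∞ :=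
  ENNReal.ofReal (x ^ (a - 1) * (1 - x) ^ (b - 1)) * eF21 a b (a + a') x

@[fun_prop]
lemma measurable_bhWeight (a a' b : ℝ) : Measurable (bhWeight a a' b) := by
  unfold bhWeight
  fun_prop

lemma lintegral_bhWeight (ha : 0 < a) (ha' : 0 < a') (hb : 0 < b) :
    ∫⁻ x in Ioo 0 1, bhWeight a a' b x
      = ENNReal.ofReal (beta a b * F32one a a b (a + b) (a + a')) := by
  unfold bhWeight eF21
  rw [lintegral_rpow_mul_one_sub_rpow_mul_tsum ha hb
      fun n => (F21Coeff_pos ha hb (add_pos ha ha') n).le, ENNReal.ofReal_mul (beta_pos ha hb).le,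
    F32one, ENNReal.ofReal_tsum_of_nonneg
      (fun n => (F32one_term_pos ha ha hb (by linarith) (by linarith) n).le)
      (summable_F32one ha ha hb (by linarith) (by linarith) (by linarith))]
  refine congrArg _ (tsum_congr fun n => ?_)
  rw [F21Coeff]
  ring_nf

lemma Cbh_eq_inv (a a' b : ℝ) : Cbh a a' b = (beta a b * F32one a a b (a + b) (a + a'))⁻¹ := by
  rw [Cbh, beta, div_mul_eq_mul_div, inv_div]

lemma beta_mul_F32one_pos (ha : 0 < a) (ha' : 0 < a') (hb : 0 < b) :
    0 < beta a b * F32one a a b (a + b) (a + a') :=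
  mul_pos (beta_pos ha hb) (F32one_pos ha ha hb (by linarith) (by linarith) (by linarith))

lemma ofReal_Cbh (ha : 0 < a) (ha' : 0 < a') (hb : 0 < b) :
    ENNReal.ofReal (Cbh a a' b) = (∫⁻ x in Ioo 0 1, bhWeight a a' b x)⁻¹ := by
  rw [lintegral_bhWeight ha ha' hb, Cbh_eq_inv,
    ENNReal.ofReal_inv_of_pos (beta_mul_F32one_pos ha ha' hb)]

lemma ofReal_bhDens (ha : 0 < a) (ha' : 0 < a') (hb : 0 < b) :
    (fun x => ENNReal.ofReal (bhDens a a' b x))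
      = (Ioo 0 1).indicator (ENNReal.ofReal (Cbh a a' b) • bhWeight a a' b) := by
  ext x
  by_cases hx : x ∈ Ioo 0 1
  · have hC : 0 ≤ Cbh a a' b := (Cbh_eq_inv a a' b ▸ inv_pos.2 (beta_mul_F32one_pos ha ha' hb)).le
    have := hx.1
    have := sub_pos.2 hx.2
    rw [indicator_of_mem hx, bhDens, if_pos (mem_Ioo.1 hx), mul_assoc (Cbh a a' b), mul_assoc,
      ENNReal.ofReal_mul hC, ENNReal.ofReal_mul (by positivity),
      ofReal_F21 ha hb (add_pos ha ha') hx.1.le hx.2]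
    rfl
  · rw [indicator_of_notMem hx, bhDens, if_neg (mem_Ioo.not.1 hx), ENNReal.ofReal_zero]

lemma bhMeasure_eq_smul_withDensity (ha : 0 < a) (ha' : 0 < a') (hb : 0 < b) :
    bhMeasure a a' b
      = (∫⁻ x in Ioo 0 1, bhWeight a a' b x)⁻¹ •
        (volume.restrict (Ioo 0 1)).withDensity (bhWeight a a' b) := by
  rw [bhMeasure, ofReal_bhDens ha ha' hb, withDensity_indicator measurableSet_Ioo,
    withDensity_smul _ (by fun_prop), ofReal_Cbh ha ha' hb]

lemma isProbabilityMeasure_bhMeasure (ha : 0 < a) (ha' : 0 < a') (hb : 0 < b) :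
    IsProbabilityMeasure (bhMeasure a a' b) := by
  constructor
  rw [bhMeasure_eq_smul_withDensity ha ha' hb, Measure.smul_apply,
    withDensity_apply _ MeasurableSet.univ, Measure.restrict_univ, smul_eq_mul]
  refine ENNReal.inv_mul_cancel ?_ ?_
  · simpa [lintegral_bhWeight ha ha' hb] using beta_mul_F32one_pos ha ha' hb
  · simp [lintegral_bhWeight ha ha' hb]

end BetaHypergeometric

section WithDensity

lemma map_withDensity_image_eq {φ φ' ψ f : ℝ → ℝ} {s : Set ℝ} (hs : MeasurableSet s)
    (hφ : ∀ y ∈ s, HasDerivWithinAt φ (φ' y) s y) (hψ : Measurable ψ) (hinv : LeftInvOn ψ φ s) :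
    ((volume.restrict (φ '' s)).withDensity fun w => ENNReal.ofReal (f w)).map ψ
      = (volume.restrict s).withDensity fun y => ENNReal.ofReal (|φ' y| * f (φ y)) := by
  ext A hA
  rw [Measure.map_apply hψ hA, withDensity_apply _ (hψ hA), withDensity_apply _ hA,
    Measure.restrict_restrict (hψ hA), Measure.restrict_restrict hA, ← hinv.image_inter',
    lintegral_image_eq_lintegral_abs_deriv_mul (hA.inter hs)
      (fun y hy => (hφ y hy.2).mono inter_subset_right) (hinv.injOn.mono inter_subset_right)]
  simp_rw [ENNReal.ofReal_mul (abs_nonneg _)]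

lemma comp_withDensity_eq_withDensity_lintegral {α β : Type*} [MeasurableSpace α]
    [MeasurableSpace β] {κ : Kernel α β} {μ : Measure α} [SFinite μ] {ν : Measure β} [SFinite ν]
    {g : α → ℝ≥0∞} (hg : Measurable g) {k : α → β → ℝ≥0∞} (hk : Measurable (Function.uncurry k))
    (hκ : ∀ᵐ x ∂μ, κ x = ν.withDensity (k x)) :
    κ ∘ₘ μ.withDensity g = ν.withDensity fun y => ∫⁻ x, g x * k x y ∂μ := by
  ext A hA
  have hgk : Measurable fun p : α × β => g p.1 * k p.1 p.2 := by fun_prop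
  calc (κ ∘ₘ μ.withDensity g) A
      = ∫⁻ x, g x * κ x A ∂μ := by
        rw [Measure.bind_apply hA κ.aemeasurable, lintegral_withDensity_eq_lintegral_mul _ hg
          (κ.measurable_coe hA)]
        rfl
    _ = ∫⁻ x, ∫⁻ y in A, g x * k x y ∂ν ∂μ := by
        refine lintegral_congr_ae (hκ.mono fun x hx => ?_)
        simp only [hx]
        rw [withDensity_apply _ hA, lintegral_const_mul _ (by fun_prop)]
    _ = ∫⁻ y in A, ∫⁻ x, g x * k x y ∂μ ∂ν := lintegral_lintegral_swap hgk.aemeasurable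
    _ = _ := (withDensity_apply _ hA).symm

end WithDensity

section MobiusKernel

/-- The Markov kernel `x ↦ law of 1 / (1 + x W)`, where `W` has law `η`. If `η` is not s-finite,
the product is the junk value `0`. -/
noncomputable def mobiusKernel (η : Measure ℝ) : Kernel ℝ ℝ :=
  (Kernel.id ×ₖ Kernel.const ℝ η).map fun p => 1 / (1 + p.1 * p.2)

variable {η : Measure ℝ}

lemma mobiusKernel_apply [SFinite η] (x : ℝ) :
    mobiusKernel η x = η.map fun w => 1 / (1 + x * w) := by
  rw [mobiusKernel, Kernel.map_apply _ (by fun_prop), Kernel.prod_apply, Kernel.id_apply,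
    Kernel.const_apply, Measure.dirac_prod, Measure.map_map (by fun_prop) (by fun_prop)]
  rfl

instance [IsProbabilityMeasure η] : IsMarkovKernel (mobiusKernel η) :=
  Kernel.IsMarkovKernel.map _ (by fun_prop)

lemma map_one_div_one_add_mul_eq_mobiusKernel_comp {Ω : Type*} [MeasurableSpace Ω]
    {μ : Measure Ω} [IsFiniteMeasure μ] {X W : Ω → ℝ} (hX : AEMeasurable X μ)
    (hW : AEMeasurable W μ) (hXW : IndepFun X W μ) :
    μ.map (fun ω => 1 / (1 + X ω * W ω)) = mobiusKernel (μ.map W) ∘ₘ μ.map X := by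
  rw [mobiusKernel, ← Measure.map_comp _ _ (by fun_prop), ← Measure.compProd_eq_comp_prod,
    Measure.compProd_const, ← hXW.map_prod_eq_prod_map_map hX hW,
    AEMeasurable.map_map_of_aemeasurable (by fun_prop) (by fun_prop)]
  rfl

end MobiusKernel

section BetaSecondKind

variable {p q x : ℝ}

lemma beta2_eq_withDensity (p q : ℝ) :
    beta2 p q = (volume.restrict (Ioi 0)).withDensity fun w =>
      ENNReal.ofReal (w ^ (p - 1) * (1 + w) ^ (-(p + q)) / beta p q) := by
  rw [beta2, ← withDensity_indicator measurableSet_Ioi]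
  congr with w
  by_cases hw : 0 < w
  · rw [indicator_of_mem (mem_Ioi.2 hw), beta2Dens, if_pos hw, beta]
    congr 1
    rw [div_div_eq_mul_div]
    ring
  · rw [indicator_of_notMem (mem_Ioi.not.2 hw), beta2Dens, if_neg hw, ENNReal.ofReal_zero]

instance (p q : ℝ) : SFinite (beta2 p q) := by
  unfold beta2
  infer_instance

/-- The density on `(0,1)` of `1 / (1 + x W)`, where `W` has law `beta2 p q`. -/
noncomputable def mobiusDensity (p q x y : ℝ) : ℝ :=
  x ^ q * y ^ (q - 1) * (1 - y) ^ (p - 1) * (1 - y * (1 - x)) ^ (-(p + q)) / beta p q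

@[fun_prop]
lemma measurable_mobiusDensity (p q : ℝ) : Measurable (Function.uncurry (mobiusDensity p q)) := by
  unfold mobiusDensity Function.uncurry
  fun_prop

lemma leftInvOn_one_div_one_add_mul (hx : 0 < x) :
    LeftInvOn (fun w => 1 / (1 + x * w)) (fun y => (1 - y) / (x * y)) (Ioo 0 1) := by
  rintro y ⟨hy, -⟩
  simp only
  field_simp
  ring

lemma image_one_sub_div_mul_Ioo (hx : 0 < x) :
    (fun y => (1 - y) / (x * y)) '' Ioo 0 1 = Ioi 0 := by
  refine Subset.antisymm ?_ fun w (hw : 0 < w) => ⟨1 / (1 + x * w), ⟨by positivity, ?_⟩, ?_⟩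
  · rintro _ ⟨y, ⟨hy₀, hy₁⟩, rfl⟩
    exact div_pos (sub_pos.2 hy₁) (mul_pos hx hy₀)
  · exact (div_lt_one (by positivity)).2 (by linarith [mul_pos hx hw])
  · simp only
    field_simp
    ring

lemma hasDerivAt_one_sub_div_mul (hx : x ≠ 0) {y : ℝ} (hy : y ≠ 0) :
    HasDerivAt (fun y => (1 - y) / (x * y)) (-1 / (x * y ^ 2)) y := by
  have h := ((hasDerivAt_id y).const_sub 1).fun_div ((hasDerivAt_id y).const_mul x)
    (mul_ne_zero hx hy)
  refine h.congr_deriv ?_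
  simp only [id]
  field_simp
  ring

lemma abs_deriv_mul_beta2_density_comp (p q : ℝ) (hx : 0 < x) {y : ℝ} (hy : y ∈ Ioo 0 1) :
    |-1 / (x * y ^ 2)| * (((1 - y) / (x * y)) ^ (p - 1) *
        (1 + (1 - y) / (x * y)) ^ (-(p + q)) / beta p q)
      = mobiusDensity p q x y := by
  obtain ⟨hy₀, hy₁⟩ := hy
  have hy' := sub_pos.2 hy₁
  have hxy := mul_pos hx hy₀
  have hden : 0 < 1 - y * (1 - x) := by linarith
  have hone : 1 + (1 - y) / (x * y) = (1 - y * (1 - x)) / (x * y) := by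
    field_simp
    ring
  have hpow : |-1 / (x * y ^ 2)| / ((x * y) ^ (p - 1) * (x * y) ^ (-(p + q)))
      = x ^ q * y ^ (q - 1) := by
    rw [neg_div, abs_neg, abs_of_pos (by positivity), ← rpow_add hxy, div_eq_mul_inv,
      ← rpow_neg hxy.le, show -(p - 1 + -(p + q)) = q + 1 by ring, rpow_add_one hxy.ne',
      mul_rpow hx.le hy₀.le, rpow_sub_one hy₀.ne']
    field_simp
  rw [hone, div_rpow hy'.le hxy.le, div_rpow hden.le hxy.le, mobiusDensity, ← hpow]
  ring

lemma map_one_div_one_add_mul_beta2 (p q : ℝ) (hx : 0 < x) :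
    (beta2 p q).map (fun w => 1 / (1 + x * w))
      = (volume.restrict (Ioo 0 1)).withDensity fun y =>
        ENNReal.ofReal (mobiusDensity p q x y) := by
  rw [beta2_eq_withDensity, ← image_one_sub_div_mul_Ioo hx,
    map_withDensity_image_eq measurableSet_Ioo (fun y hy =>
      (hasDerivAt_one_sub_div_mul hx.ne' hy.1.ne').hasDerivWithinAt) (by fun_prop)
      (leftInvOn_one_div_one_add_mul hx)]
  refine withDensity_congr_ae ((ae_restrict_mem measurableSet_Ioo).mono fun y hy => ?_)
  simp only [abs_deriv_mul_beta2_density_comp p q hx hy]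

lemma mobiusDensity_pos (hp : 0 < p) (hq : 0 < q) (hx : 0 < x) {y : ℝ} (hy : y ∈ Ioo 0 1) :
    0 < mobiusDensity p q x y := by
  obtain ⟨hy₀, hy₁⟩ := hy
  have := sub_pos.2 hy₁
  have : 0 < 1 - y * (1 - x) := by linarith [mul_pos hx hy₀]
  have := beta_pos hp hq
  unfold mobiusDensity
  positivity

lemma isProbabilityMeasure_beta2 (hp : 0 < p) (hq : 0 < q) : IsProbabilityMeasure (beta2 p q) := by
  have hβ := beta_pos hq hp
  have hdens (y : ℝ) :
      mobiusDensity p q 1 y = y ^ (q - 1) * (1 - y) ^ (p - 1) * (beta q p)⁻¹ := by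
    simp [mobiusDensity, beta, mul_comm (Gamma p), add_comm p, div_eq_mul_inv]
  have : IsProbabilityMeasure ((beta2 p q).map fun w => 1 / (1 + 1 * w)) := by
    constructor
    rw [map_one_div_one_add_mul_beta2 p q one_pos, withDensity_apply _ MeasurableSet.univ,
      Measure.restrict_univ]
    simp_rw [hdens, ENNReal.ofReal_mul' (inv_nonneg.2 hβ.le)]
    rw [lintegral_mul_const _ (by fun_prop), lintegral_rpow_mul_one_sub_rpow hq hp,
      ← ENNReal.ofReal_mul hβ.le, mul_inv_cancel₀ hβ.ne', ENNReal.ofReal_one]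
  exact Measure.isProbabilityMeasure_of_map (f := fun w => 1 / (1 + 1 * w))

end BetaSecondKind

section InvariantMeasure

variable {α : Type*} [MeasurableSpace α] {κ : Kernel α α} {μ ν : Measure α}

/-- Pushing `μ ≤ (μ - ν) + ν` forward gives `μ - ν ≤ κ ∘ₘ (μ - ν)`, and both sides have the same
mass. -/
lemma invariant_measure_sub [IsMarkovKernel κ] [IsFiniteMeasure μ] [IsFiniteMeasure ν]
    (hμ : κ.Invariant μ) (hν : κ.Invariant ν) : κ.Invariant (μ - ν) := by
  have hle : μ ≤ κ ∘ₘ (μ - ν) + ν := by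
    calc μ = κ ∘ₘ μ := hμ.symm
      _ ≤ κ ∘ₘ (μ - ν + ν) := by
        refine Measure.le_intro fun s hs _ => ?_
        rw [Measure.bind_apply hs κ.aemeasurable, Measure.bind_apply hs κ.aemeasurable]
        exact lintegral_mono' (Measure.sub_le_iff_le_add.1 le_rfl) le_rfl
      _ = κ ∘ₘ (μ - ν) + ν := by rw [Measure.comp_add, hν.def]
  exact (Measure.eq_of_le_of_measure_univ_eq (Measure.sub_le_of_le_add hle)
    Measure.comp_apply_univ.symm).symm

lemma ae_apply_eq_zero_of_invariant (hμ : κ.Invariant μ) {s : Set α} (hs : μ s = 0) :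
    ∀ᵐ x ∂μ, κ x s = 0 := by
  rw [← hμ.def] at hs
  exact (Measure.ae_ae_of_ae_comp (measure_eq_zero_iff_ae_notMem.1 hs)).mono
    fun _ => measure_eq_zero_iff_ae_notMem.2

lemma eq_zero_or_eq_zero_of_mutuallySingular_of_invariant (hμ : κ.Invariant μ)
    (hν : κ.Invariant ν) (hμν : μ ⟂ₘ ν) (hκ : ∀ᵐ x ∂μ, ∀ᵐ y ∂ν, ¬ κ x ⟂ₘ κ y) :
    μ = 0 ∨ ν = 0 := by
  obtain ⟨s, hs, hμs, hνs⟩ := hμν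
  have hκs := ae_apply_eq_zero_of_invariant hμ hμs
  have hκs' := ae_apply_eq_zero_of_invariant hν hνs
  by_contra! h
  have := ae_neBot.2 h.1
  have := ae_neBot.2 h.2
  obtain ⟨x, hx, hxs⟩ := (hκ.and hκs).exists
  obtain ⟨y, hy, hys⟩ := (hx.and hκs').exists
  exact hy ⟨s, hs, hxs, hys⟩

/-- The positive and negative parts of `μ - ν` are invariant and mutually singular. -/
theorem eq_of_invariant_of_not_mutuallySingular [IsMarkovKernel κ] [IsProbabilityMeasure μ]
    [IsProbabilityMeasure ν] (hμ : κ.Invariant μ) (hν : κ.Invariant ν)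
    (hκ : ∀ᵐ x ∂μ, ∀ᵐ y ∂ν, ¬ κ x ⟂ₘ κ y) : μ = ν := by
  have hκ' : ∀ᵐ x ∂(μ - ν), ∀ᵐ y ∂(ν - μ), ¬ κ x ⟂ₘ κ y :=
    ae_mono Measure.sub_le (hκ.mono fun _ hx => ae_mono Measure.sub_le hx)
  rcases eq_zero_or_eq_zero_of_mutuallySingular_of_invariant (invariant_measure_sub hμ hν)
    (invariant_measure_sub hν hμ) Measure.mutually_singular_measure_sub hκ' with h | h
  · refine Measure.eq_of_le_of_isProbabilityMeasure ?_
    simpa using Measure.sub_le_iff_le_add.1 h.le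
  · refine (Measure.eq_of_le_of_isProbabilityMeasure ?_).symm
    simpa using Measure.sub_le_iff_le_add.1 h.le

lemma measure_eq_zero_of_invariant [IsMarkovKernel κ] [IsFiniteMeasure μ] (hμ : κ.Invariant μ)
    {A : Set α} (hA : MeasurableSet A) (habs : ∀ x ∉ A, κ x A = 0) (hexit : ∀ x ∈ A, κ x Aᶜ ≠ 0) :
    μ A = 0 := by
  have hstay : ∫⁻ x in A, κ x A ∂μ = μ A := by
    rw [← lintegral_indicator hA]
    conv_rhs => rw [← hμ.def, Measure.bind_apply hA κ.aemeasurable]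
    congr with x
    by_cases hx : x ∈ A <;> simp [hx, habs]
  have htotal : ∫⁻ x in A, κ x A ∂μ + ∫⁻ x in A, κ x Aᶜ ∂μ = μ A := by
    rw [← lintegral_add_left (κ.measurable_coe hA)]
    simp [measure_add_measure_compl hA]
  have hleave : ∫⁻ x in A, κ x Aᶜ ∂μ = 0 := by
    rw [hstay] at htotal
    exact (ENNReal.add_right_inj (measure_ne_top μ A)).1 (htotal.trans (add_zero _).symm)
  rw [lintegral_eq_zero_iff (κ.measurable_coe hA.compl), Filter.EventuallyEq,
    ae_restrict_iff' hA] at hleave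
  exact measure_eq_zero_iff_ae_notMem.2 (hleave.mono fun x hx hxA => hexit x hxA (hx hxA))

end InvariantMeasure

section MobiusChain

variable {p q a a' b : ℝ}

lemma mobiusKernel_beta2_apply {x : ℝ} (hx : 0 < x) :
    mobiusKernel (beta2 p q) x = (volume.restrict (Ioo 0 1)).withDensity fun y =>
      ENNReal.ofReal (mobiusDensity p q x y) := by
  rw [mobiusKernel_apply, map_one_div_one_add_mul_beta2 p q hx]

lemma restrict_Ioo_absolutelyContinuous_mobiusKernel_beta2 (hp : 0 < p) (hq : 0 < q)
    {x : ℝ} (hx : 0 < x) :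
    volume.restrict (Ioo 0 1) ≪ mobiusKernel (beta2 p q) x := by
  rw [mobiusKernel_beta2_apply hx]
  refine withDensity_absolutelyContinuous' (by fun_prop)
    ((ae_restrict_mem measurableSet_Ioo).mono fun y hy => ?_)
  simpa using mobiusDensity_pos hp hq hx hy

lemma not_mutuallySingular_mobiusKernel_beta2 (hp : 0 < p) (hq : 0 < q)
    {x y : ℝ} (hx : 0 < x) (hy : 0 < y) :
    ¬ mobiusKernel (beta2 p q) x ⟂ₘ mobiusKernel (beta2 p q) y := fun h => by
  have := h.mono_ac (restrict_Ioo_absolutelyContinuous_mobiusKernel_beta2 hp hq hx)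
    (restrict_Ioo_absolutelyContinuous_mobiusKernel_beta2 hp hq hy)
  simp [Measure.MutuallySingular.self_iff] at this

lemma ae_beta2_pos (p q : ℝ) : ∀ᵐ w ∂beta2 p q, 0 < w := by
  rw [beta2_eq_withDensity]
  exact (withDensity_absolutelyContinuous _ _).ae_le (ae_restrict_mem measurableSet_Ioi)

lemma beta2_Iio_ne_zero (hp : 0 < p) (hq : 0 < q) {ε : ℝ} (hε : 0 < ε) :
    beta2 p q (Iio ε) ≠ 0 := by
  have hac : volume.restrict (Ioi 0) ≪ beta2 p q := by
    rw [beta2_eq_withDensity]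
    refine withDensity_absolutelyContinuous' (by fun_prop)
      ((ae_restrict_mem measurableSet_Ioi).mono fun w (hw : 0 < w) => ?_)
    have := beta_pos hp hq
    have : 0 < w ^ (p - 1) * (1 + w) ^ (-(p + q)) / beta p q := by positivity
    simpa using this
  intro h
  have := hac h
  rw [Measure.restrict_apply measurableSet_Iio, Iio_inter_Ioi, volume_Ioo] at this
  simp [hε.not_ge] at this

/-- From `x > 0` the chain never reaches `(-∞, 0]`, and from `x ≤ 0` it leaves it whenever
`W < 1 / (1 - x)`. -/
lemma ae_pos_of_invariant_mobiusKernel {η ν : Measure ℝ} [IsProbabilityMeasure η]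
    [IsFiniteMeasure ν] (hη : ∀ᵐ w ∂η, 0 ≤ w) (hη₀ : ∀ ε > 0, η (Iio ε) ≠ 0)
    (hν : (mobiusKernel η).Invariant ν) : ∀ᵐ x ∂ν, 0 < x := by
  have hν₀ : ν (Iic 0) = 0 := by
    refine measure_eq_zero_of_invariant hν measurableSet_Iic (fun x hx => ?_) fun x hx h => ?_
    · rw [mobiusKernel_apply, Measure.map_apply (by fun_prop) measurableSet_Iic,
        measure_eq_zero_iff_ae_notMem]
      have hx₀ : 0 < x := not_le.1 hx
      filter_upwards [hη] with w hw
      have : 0 < 1 / (1 + x * w) := by positivity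
      exact not_le.2 this
    · have hx₀ : x ≤ 0 := hx
      have hx' : 0 < 1 - x := by linarith
      rw [mobiusKernel_apply, Measure.map_apply (by fun_prop) measurableSet_Iic.compl,
        measure_eq_zero_iff_ae_notMem] at h
      refine hη₀ (1 / (1 - x)) (one_div_pos.2 hx') (measure_eq_zero_iff_ae_notMem.2 ?_)
      filter_upwards [hη, h] with w hw₀ hw hwlt
      have hwx : w * (1 - x) < 1 := (lt_div_iff₀ hx').1 hwlt
      have : 0 < 1 / (1 + x * w) := one_div_pos.2 (by linarith)
      exact hw (not_le.2 this)
  simpa using measure_eq_zero_iff_ae_notMem.1 hν₀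

lemma lintegral_bhWeight_mul_mobiusDensity (ha : 0 < a) (ha' : 0 < a') (hb : 0 < b) {y : ℝ}
    (hy : y ∈ Ioo 0 1) :
    ∫⁻ x in Ioo 0 1, bhWeight a a' b x * ENNReal.ofReal (mobiusDensity b a' x y)
      = bhWeight a' a b y := by
  obtain ⟨hy₀, hy₁⟩ := hy
  have := sub_pos.2 hy₁
  have hβ := beta_pos hb ha'
  have factor : ∀ x ∈ Ioo (0 : ℝ) 1, bhWeight a a' b x * ENNReal.ofReal (mobiusDensity b a' x y)
      = ENNReal.ofReal (y ^ (a' - 1) * (1 - y) ^ (b - 1) / beta b a') *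
        (ENNReal.ofReal (x ^ (a + a' - 1) * (1 - x) ^ (b - 1) *
          (1 - y * (1 - x)) ^ (-(b + a'))) * eF21 a b (a + a') x) := by
    rintro x ⟨hx₀, hx₁⟩
    have := sub_pos.2 hx₁
    rw [bhWeight, mul_right_comm, ← ENNReal.ofReal_mul (by positivity), ← mul_assoc,
      ← ENNReal.ofReal_mul (by positivity), mobiusDensity, add_sub_right_comm, rpow_add hx₀]
    ring_nf
  rw [setLIntegral_congr_fun measurableSet_Ioo factor, lintegral_const_mul _ (by fun_prop),
    lintegral_rpow_mul_one_sub_rpow_mul_rpow_mul_eF21 ha ha' hb hy₀.le hy₁, ← mul_assoc,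
    ← ENNReal.ofReal_mul (by positivity), div_mul_cancel₀ _ hβ.ne', bhWeight, add_comm a']

lemma mobiusKernel_beta2_comp_withDensity_bhWeight (ha : 0 < a) (ha' : 0 < a') (hb : 0 < b) :
    mobiusKernel (beta2 b a') ∘ₘ (volume.restrict (Ioo 0 1)).withDensity (bhWeight a a' b)
      = (volume.restrict (Ioo 0 1)).withDensity (bhWeight a' a b) := by
  rw [comp_withDensity_eq_withDensity_lintegral (measurable_bhWeight a a' b)
    (k := fun x y => ENNReal.ofReal (mobiusDensity b a' x y)) (by unfold Function.uncurry; fun_prop)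
    ((ae_restrict_mem measurableSet_Ioo).mono fun x hx => mobiusKernel_beta2_apply hx.1)]
  refine withDensity_congr_ae ((ae_restrict_mem measurableSet_Ioo).mono fun y hy => ?_)
  exact lintegral_bhWeight_mul_mobiusDensity ha ha' hb hy

lemma mobiusKernel_beta2_comp_bhMeasure (ha : 0 < a) (ha' : 0 < a') (hb : 0 < b) :
    mobiusKernel (beta2 b a') ∘ₘ bhMeasure a a' b = bhMeasure a' a b := by
  have := isProbabilityMeasure_beta2 hb ha'
  have hstep := mobiusKernel_beta2_comp_withDensity_bhWeight ha ha' hb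
  have hmass : ∫⁻ x in Ioo 0 1, bhWeight a a' b x = ∫⁻ x in Ioo 0 1, bhWeight a' a b x := by
    have h := congrArg (· univ) hstep
    simpa [withDensity_apply _ MeasurableSet.univ, Measure.comp_apply_univ] using h
  rw [bhMeasure_eq_smul_withDensity ha ha' hb, bhMeasure_eq_smul_withDensity ha' ha hb,
    Measure.comp_smul, hstep, hmass]

end MobiusChain

theorem bh_characterization_symmetric_general {Ω : Type*} [MeasurableSpace Ω] (μ : Measure Ω)
    [IsProbabilityMeasure μ] (X W : Ω → ℝ) (hX : AEMeasurable X μ)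
    (a b : ℝ) (ha : 0 < a) (hb : 0 < b)
    (hInd : IndepFun X W μ) (hWlaw : μ.map W = beta2 b a) :
    μ.map X = μ.map (fun ω => 1 / (1 + X ω * W ω)) ↔ μ.map X = bhMeasure a a b := by
  have := isProbabilityMeasure_beta2 hb ha
  have := isProbabilityMeasure_bhMeasure ha ha hb
  have := Measure.isProbabilityMeasure_map hX
  have hW : AEMeasurable W μ := AEMeasurable.of_map_ne_zero (hWlaw ▸ NeZero.ne (beta2 b a))
  have hstep : μ.map (fun ω => 1 / (1 + X ω * W ω)) = mobiusKernel (beta2 b a) ∘ₘ μ.map X := by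
    simpa only [hWlaw] using map_one_div_one_add_mul_eq_mobiusKernel_comp hX hW hInd
  have hinv : (mobiusKernel (beta2 b a)).Invariant (bhMeasure a a b) :=
    mobiusKernel_beta2_comp_bhMeasure ha ha hb
  have hpos {ν : Measure ℝ} [IsFiniteMeasure ν] (hν : (mobiusKernel (beta2 b a)).Invariant ν) :
      ∀ᵐ x ∂ν, 0 < x :=
    ae_pos_of_invariant_mobiusKernel ((ae_beta2_pos b a).mono fun _ => le_of_lt)
      (fun _ => beta2_Iio_ne_zero hb ha) hν
  rw [hstep]
  refine ⟨fun h => ?_, fun h => by rw [h, hinv.def]⟩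
  have hXinv : (mobiusKernel (beta2 b a)).Invariant (μ.map X) := h.symm
  refine eq_of_invariant_of_not_mutuallySingular hXinv hinv ?_
  filter_upwards [hpos hXinv] with x hx
  filter_upwards [hpos hinv] with y hy
  exact not_mutuallySingular_mobiusKernel_beta2 hb ha hx hy

theorem bh_characterization_symmetric {Ω : Type*} [MeasurableSpace Ω] (μ : Measure Ω)
    [IsProbabilityMeasure μ] (X W : Ω → ℝ)
    (hX : Measurable X) (hW : Measurable W) (hXpos : ∀ ω, 0 < X ω)
    (a b : ℝ) (ha : 0 < a) (hb : 0 < b)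
    (hInd : IndepFun X W μ) (hWlaw : μ.map W = beta2 b a) :
    μ.map X = μ.map (fun ω => 1 / (1 + X ω * W ω)) ↔ μ.map X = bhMeasure a a b :=
  bh_characterization_symmetric_general μ X W hX.aemeasurable a b ha hb hInd hWlaw
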